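/- arXiv:2505.06577 — 6 statements merged into one kernel-verified Lean document; each statement's English description precedes it below -/
import Mathlib

section
/- Let n ≥ 1 and let λ : Fin n → ℂ lie in the Poincaré domain. Then λ admits only finitely many resonances: the set {(s, m) ∈ Fin n × (Fin n → ℕ) : |m| ≥ 2 and λ_s = (m,λ)} is finite. -/
open scoped BigOperators

/-!
If two distinct multi-indices `m ≤ m'` gave the same value `∑ k, m k • l k`, their difference would
be a nontrivial relation among the `l k` with nonnegative coefficients, and normalising it would put
`0` in the convex hull. So the multi-indices with a given value form an antichain in `ι → ℕ`, and
by Dickson's lemma such antichains are finite.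
-/

section ConvexHull

variable {K E ι : Type*} [Field K] [LinearOrder K] [IsStrictOrderedRing K] [AddCommGroup E]
  [Module K E] [Fintype ι] {l : ι → E}

theorem zero_mem_convexHull_range_of_sum_smul_eq_zero {w : ι → K} (hw : 0 < w)
    (hsum : ∑ k, w k • l k = 0) : (0 : E) ∈ convexHull K (Set.range l) := by
  have hmem : Finset.univ.centerMass w l ∈ convexHull K (Set.range l) :=
    Finset.univ.centerMass_mem_convexHull (fun k _ => hw.le k) (Fintype.sum_pos hw)
      fun k _ => Set.mem_range_self k
  rwa [Finset.centerMass, hsum, smul_zero] at hmem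

theorem zero_mem_convexHull_range_of_sum_nsmul_eq_zero {m : ι → ℕ} (hm : 0 < m)
    (hsum : ∑ k, m k • l k = 0) : (0 : E) ∈ convexHull K (Set.range l) := by
  refine zero_mem_convexHull_range_of_sum_smul_eq_zero (w := fun k => (m k : K)) ?_ ?_
  · obtain ⟨-, k, hk⟩ := Pi.lt_def.mp hm
    exact Pi.lt_def.mpr ⟨fun j => Nat.cast_nonneg (m j), k, Nat.cast_pos.mpr hk⟩
  · simpa only [Nat.cast_smul_eq_nsmul] using hsum

theorem isAntichain_setOf_sum_nsmul_eq (hl : (0 : E) ∉ convexHull K (Set.range l))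
    (v : E) : IsAntichain (· ≤ ·) {m : ι → ℕ | ∑ k, m k • l k = v} := by
  intro m hm m' hm' hne hle
  have hdiff : ∑ k, (m' - m) k • l k = 0 := by
    have hsplit : ∑ k, m' k • l k = ∑ k, (m' - m) k • l k + ∑ k, m k • l k := by
      simp_rw [← Finset.sum_add_distrib, ← add_smul, ← Pi.add_apply, tsub_add_cancel_of_le hle]
    rwa [hm, hm', right_eq_add] at hsplit
  exact hl (zero_mem_convexHull_range_of_sum_nsmul_eq_zero
    (tsub_pos_of_lt (hle.lt_of_ne hne)) hdiff)

theorem finite_setOf_sum_nsmul_eq (hl : (0 : E) ∉ convexHull K (Set.range l)) (v : E) :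
    {m : ι → ℕ | ∑ k, m k • l k = v}.Finite :=
  WellQuasiOrderedLE.finite_of_isAntichain (isAntichain_setOf_sum_nsmul_eq hl v)

theorem stmt_0_general (hl : (0 : E) ∉ convexHull K (Set.range l)) :
    {p : ι × (ι → ℕ) | l p.1 = ∑ k, p.2 k • l k}.Finite := by
  refine Set.Finite.of_finite_fibers Prod.fst (Set.toFinite _) fun s _ => ?_
  refine ((finite_setOf_sum_nsmul_eq hl (l s)).image (Prod.mk s)).subset ?_
  rintro ⟨_, m⟩ ⟨hres, rfl⟩
  exact ⟨m, hres.symm, rfl⟩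

end ConvexHull

/-- If `l : Fin n → ℂ` lies in the Poincaré domain (0 is not in the convex
hull of its values), then the set of resonances `(s, m)` with `|m| ≥ 2` and
`l s = (m, l)` is finite. -/
theorem stmt_0 (n : ℕ) (hn : 1 ≤ n) (l : Fin n → ℂ)
    (hP : (0 : ℂ) ∉ convexHull ℝ (Set.range l)) :
    {p : Fin n × (Fin n → ℕ) |
      2 ≤ ∑ k, p.2 k ∧ l p.1 = ∑ k, (p.2 k : ℂ) * l k}.Finite := by
  simp only [← nsmul_eq_mul]
  exact (stmt_0_general hP).subset fun _ hp => hp.2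
end

section
/- Let n ≥ 1 and let λ : Fin n → ℂ lie in the Poincaré domain. Then there exists C ∈ ℕ such that every resonance relation λ_s = (m,λ), with s ∈ Fin n and m : Fin n → ℕ, satisfies |m| ≤ C. -/
open scoped BigOperators

/-!
If `0` has distance `δ > 0` from a convex set `s`, normalising the weights shows that every
nonnegative combination of points of `s` with total weight `W` has norm at least `δ * W`. For a
resonance `v j = (m, v)` this gives `δ * |m| ≤ ‖v j‖`, and the right-hand side is bounded.
-/

section Resonance

variable {ι E : Type*} [SeminormedAddCommGroup E] [NormedSpace ℝ E]

theorem infDist_zero_mul_sum_le_norm_sum_smul {s : Set E} (hs : Convex ℝ s)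
    {t : Finset ι} {w : ι → ℝ} {z : ι → E} (hw : ∀ i ∈ t, 0 ≤ w i) (hz : ∀ i ∈ t, z i ∈ s) :
    Metric.infDist 0 s * ∑ i ∈ t, w i ≤ ‖∑ i ∈ t, w i • z i‖ := by
  obtain hW | hW := (Finset.sum_nonneg hw).eq_or_lt
  · simp [← hW]
  · rw [← le_div_iff₀ hW]
    calc Metric.infDist 0 s ≤ dist 0 (t.centerMass w z) :=
          Metric.infDist_le_dist_of_mem (hs.centerMass_mem hw hW hz)
      _ = ‖∑ i ∈ t, w i • z i‖ / ∑ i ∈ t, w i := by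
          rw [dist_zero_left, Finset.centerMass, norm_smul, norm_inv, Real.norm_of_nonneg hW.le,
            inv_mul_eq_div]

theorem stmt_1_general {v : ι → E} (hv : Bornology.IsBounded (Set.range v))
    (h0 : (0 : E) ∉ closure (convexHull ℝ (Set.range v))) :
    ∃ C : ℕ, ∀ (j : ι) (t : Finset ι) (m : ι → ℕ),
      v j = ∑ k ∈ t, m k • v k → ∑ k ∈ t, m k ≤ C := by
  obtain ⟨R, hR⟩ := hv.exists_norm_le
  set δ := Metric.infDist 0 (convexHull ℝ (Set.range v))
  obtain ⟨C, hC⟩ := exists_nat_ge (R / δ)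
  refine ⟨C, fun j t m hres ↦ ?_⟩
  have hne : (convexHull ℝ (Set.range v)).Nonempty :=
    ⟨v j, subset_convexHull ℝ _ (Set.mem_range_self j)⟩
  have hδ : 0 < δ := (Metric.infDist_pos_iff_notMem_closure hne).1 h0
  have hweight : δ * ∑ k ∈ t, (m k : ℝ) ≤ R :=
    calc δ * ∑ k ∈ t, (m k : ℝ) ≤ ‖∑ k ∈ t, (m k : ℝ) • v k‖ :=
          infDist_zero_mul_sum_le_norm_sum_smul (convex_convexHull ℝ _)
            (fun k _ ↦ (m k).cast_nonneg)
            (fun k _ ↦ subset_convexHull ℝ _ (Set.mem_range_self k))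
      _ = ‖v j‖ := by simp only [hres, Nat.cast_smul_eq_nsmul]
      _ ≤ R := hR _ (Set.mem_range_self j)
  exact_mod_cast ((le_div_iff₀' hδ).2 hweight).trans hC

end Resonance

/-- In the Poincaré domain, resonances have bounded order: there is `C`
such that every resonance `l s = (m, l)` satisfies `|m| ≤ C`. -/
theorem stmt_1 (n : ℕ) (hn : 1 ≤ n) (l : Fin n → ℂ)
    (hP : (0 : ℂ) ∉ convexHull ℝ (Set.range l)) :
    ∃ C : ℕ, ∀ (s : Fin n) (m : Fin n → ℕ),
      l s = ∑ k, (m k : ℂ) * l k → ∑ k, m k ≤ C := by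
  have hfin := Set.finite_range l
  rw [← (hfin.isClosed_convexHull ℝ).closure_eq] at hP
  obtain ⟨C, hC⟩ := stmt_1_general hfin.isBounded hP
  exact ⟨C, fun s m hres ↦ hC s Finset.univ m (by simpa only [nsmul_eq_mul] using hres)⟩
end

section
/- Let n ≥ 1 and let λ : Fin n → ℂ lie in the Poincaré domain. Then the set g_λ of λ-resonant polynomial vector fields on ℂⁿ is a ℂ-linear subspace of the space of polynomial vector fields, and it is finite dimensional over ℂ. -/
open scoped BigOperators

/-!
Suppose two distinct exponents `d ≤ d'` have the same weight `∑ k, d k • l k`. Then `d' - d` is a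
nonzero nonnegative relation between the `l k`, and normalising it writes `0` as a convex
combination of them. In the Poincaré domain, the exponents of a given weight therefore form an
antichain of `ℕⁿ`, which is finite by Dickson's lemma. So each component of a resonant vector field
ranges over the span of finitely many monomials.
-/

open Finsupp MvPolynomial

section Fibers

variable {A B : Type*} [AddMonoid A] [PartialOrder A] [CanonicallyOrderedAdd A]
  [AddMonoid B] [IsLeftCancelAdd B]

lemma isAntichain_preimage_singleton_of_map_eq_zero_imp (f : A →+ B)
    (hf : ∀ a, f a = 0 → a = 0) (b : B) : IsAntichain (· ≤ ·) (f ⁻¹' {b}) := by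
  rintro a rfl a' ha' hne hle
  obtain ⟨c, rfl⟩ := exists_add_of_le hle
  have hc : f c = 0 := by
    simpa only [Set.mem_preimage, Set.mem_singleton_iff, map_add, add_eq_left] using ha'
  exact hne (by rw [hf c hc, add_zero])

lemma finite_preimage_singleton_of_map_eq_zero_imp [WellQuasiOrderedLE A] (f : A →+ B)
    (hf : ∀ a, f a = 0 → a = 0) (b : B) : (f ⁻¹' {b}).Finite :=
  WellQuasiOrderedLE.finite_of_isAntichain
    (isAntichain_preimage_singleton_of_map_eq_zero_imp f hf b)

end Fibers

lemma eq_zero_of_sum_smul_eq_zero_of_zero_notMem_convexHull {𝕜 E ι : Type*} [Field 𝕜]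
    [LinearOrder 𝕜] [IsStrictOrderedRing 𝕜] [AddCommGroup E] [Module 𝕜 E] {s : Set E}
    (hs : (0 : E) ∉ convexHull 𝕜 s) {t : Finset ι} {c : ι → 𝕜} {v : ι → E}
    (hc : ∀ i ∈ t, 0 ≤ c i) (hv : ∀ i ∈ t, v i ∈ s) (hsum : ∑ i ∈ t, c i • v i = 0) :
    ∀ i ∈ t, c i = 0 := by
  refine (Finset.sum_eq_zero_iff_of_nonneg hc).1 (le_antisymm (not_lt.1 fun hpos => hs ?_)
    (Finset.sum_nonneg hc))
  have hmem : t.centerMass c v ∈ convexHull 𝕜 s := t.centerMass_mem_convexHull hc hpos hv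
  rwa [Finset.centerMass, hsum, smul_zero] at hmem

lemma eq_zero_of_weight_eq_zero_of_zero_notMem_convexHull (𝕜 : Type*) {E σ : Type*} [Field 𝕜]
    [LinearOrder 𝕜] [IsStrictOrderedRing 𝕜] [AddCommGroup E] [Module 𝕜 E] {w : σ → E}
    (hw : (0 : E) ∉ convexHull 𝕜 (Set.range w)) (d : σ →₀ ℕ) (hd : weight w d = 0) : d = 0 := by
  have hsum : ∑ k ∈ d.support, (d k : 𝕜) • w k = 0 := by
    simpa only [Nat.cast_smul_eq_nsmul, weight_apply, Finsupp.sum] using hd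
  have hzero := eq_zero_of_sum_smul_eq_zero_of_zero_notMem_convexHull hw
    (fun k _ => Nat.cast_nonneg (d k)) (fun k _ => Set.mem_range_self k) hsum
  refine support_eq_empty.1 (Finset.eq_empty_of_forall_notMem fun k hk => ?_)
  exact mem_support_iff.1 hk (Nat.cast_eq_zero.1 (hzero k hk))

section ResonantVectorFields

variable (R : Type*) {M σ : Type*} [CommSemiring R]

lemma weightedHomogeneousSubmodule_fg_of_finite [AddCommMonoid M] (w : σ → M) (a : M)
    (hfin : (weight (R := ℕ) w ⁻¹' {a}).Finite) : (weightedHomogeneousSubmodule R w a).FG := by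
  rw [weightedHomogeneousSubmodule_eq_finsupp_supported, ← Module.Finite.iff_fg]
  have := hfin.to_subtype
  exact Module.Finite.of_basis (basisRestrictSupport R (weight (R := ℕ) w ⁻¹' {a}))

/-- The `l`-resonant polynomial vector fields `∑ j, X j ∂/∂z_j` on the affine space with
coordinates indexed by `σ`: the component `X j` is weighted homogeneous of degree `l j`, where the
variable `z_k` has weight `l k`. -/
noncomputable def resonantVectorFields [AddCommMonoid M] (l : σ → M) :
    Submodule R (σ → MvPolynomial σ R) :=
  Submodule.pi Set.univ fun j => weightedHomogeneousSubmodule R l (l j)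

variable {R} in
lemma mem_resonantVectorFields_iff [AddCommMonoid M] [Fintype σ] {l : σ → M}
    {X : σ → MvPolynomial σ R} :
    X ∈ resonantVectorFields R l ↔ ∀ j, ∀ m ∈ (X j).support, l j = ∑ k, m k • l k := by
  simp only [resonantVectorFields, Submodule.mem_pi, Set.mem_univ, true_implies,
    mem_weightedHomogeneousSubmodule, IsWeightedHomogeneous, MvPolynomial.mem_support_iff,
    weight_eq_sum, eq_comm]

lemma resonantVectorFields_fg [AddCommMonoid M] [IsLeftCancelAdd M] [Finite σ] {l : σ → M}
    (hl : ∀ d : σ →₀ ℕ, weight l d = 0 → d = 0) : (resonantVectorFields R l).FG :=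
  Submodule.fg_pi fun j => weightedHomogeneousSubmodule_fg_of_finite R l (l j)
    (finite_preimage_singleton_of_map_eq_zero_imp (weight l) hl (l j))

end ResonantVectorFields

theorem stmt_8_general (R 𝕜 : Type*) {E σ : Type*} [CommSemiring R] [Field 𝕜] [LinearOrder 𝕜]
    [IsStrictOrderedRing 𝕜] [AddCommGroup E] [Module 𝕜 E] [Fintype σ] (l : σ → E)
    (hP : (0 : E) ∉ convexHull 𝕜 (Set.range l)) :
    ∃ V : Submodule R (σ → MvPolynomial σ R),
      (∀ X, X ∈ V ↔ ∀ j, ∀ m ∈ (X j).support, l j = ∑ k, m k • l k) ∧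
      Module.Finite R V :=
  ⟨resonantVectorFields R l, fun _ => mem_resonantVectorFields_iff,
    Module.Finite.iff_fg.2 <| resonantVectorFields_fg R <|
      eq_zero_of_weight_eq_zero_of_zero_notMem_convexHull 𝕜 hP⟩

/-- In the Poincaré domain, the λ-resonant polynomial vector fields form a
finite dimensional ℂ-linear subspace of the space of polynomial vector fields. -/
theorem stmt_8 (n : ℕ) (hn : 1 ≤ n) (l : Fin n → ℂ)
    (hP : (0 : ℂ) ∉ convexHull ℝ (Set.range l)) :
    ∃ V : Submodule ℂ (Fin n → MvPolynomial (Fin n) ℂ),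
      (∀ X, X ∈ V ↔ ∀ j, ∀ m ∈ (X j).support, l j = ∑ k, (m k : ℂ) * l k) ∧
      FiniteDimensional ℂ V := by
  simpa only [nsmul_eq_mul] using stmt_8_general ℂ ℝ l hP
end

section
/- Let n ≥ 1 and λ : Fin n → ℂ. If X is a λ-resonant polynomial vector field on ℂⁿ and Y is a polynomial vector field having only non-λ-resonant monomials (for every j and every exponent m in the support of Y_j one has λ_j ≠ (m,λ)), then the Lie bracket [X,Y] has only non-λ-resonant monomials: for every j and every exponent m in the support of [X,Y]_j one has λ_j ≠ (m,λ). -/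
open scoped BigOperators

/-!
Give `z_k` the weight `λ_k`, so that a monomial of `X_j` is resonant exactly when its weight is
`λ_j`. If `z^a` in `P` and `z^c` in `Q` contribute the monomial `z^m` to `P ∂Q/∂z_k`, then
`a + c = m + e_k`, so `wt a + wt c = wt m + λ_k`. Were `m` resonant for the
`j`-th component, `a` would be resonant for the `k`-th component if and only if `c` were resonant
for the `j`-th. But in both `X_k ∂Y_j/∂z_k` and `Y_k ∂X_j/∂z_k`, exactly one of the two is.
-/

/-- Polynomial vector fields `∑ j, X j ∂/∂z_j` on affine space with coordinates indexed by `σ`,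
encoded by their components. -/
abbrev PolynomialVectorField (σ R : Type*) [CommSemiring R] := σ → MvPolynomial σ R

namespace PolynomialVectorField

open MvPolynomial

variable {σ R M : Type*}

/-- The Lie bracket of two polynomial vector fields, that is, the commutator of the corresponding
derivations, in coordinates. -/
noncomputable def lieBracket [Fintype σ] [CommRing R] (X Y : PolynomialVectorField σ R) :
    PolynomialVectorField σ R :=
  fun j ↦ ∑ k, (X k * pderiv k (Y j) - Y k * pderiv k (X j))

section Weights

variable [CommSemiring R]

/-- Resonant vector fields for the weights `w`, which play the role of the eigenvalues `λ`: every
monomial of the `j`-th component has weight `w j`. -/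
def IsResonant [AddCommMonoid M] (w : σ → M) (X : PolynomialVectorField σ R) : Prop :=
  ∀ j, IsWeightedHomogeneous w (X j) (w j)

/-- The polynomials without monomials of weight `d`: the natural complement of
`weightedHomogeneousSubmodule R w d` in the weight decomposition. -/
noncomputable def offWeightSubmodule (R : Type*) [CommSemiring R] [AddCommMonoid M] (w : σ → M)
    (d : M) : Submodule R (MvPolynomial σ R) :=
  restrictSupport R {m | Finsupp.weight w m ≠ d}

/-- Vector fields having only nonresonant monomials for the weights `w`. This is not the negation of
`IsResonant`: the zero vector field satisfies both. -/
def IsNonresonant [AddCommMonoid M] (w : σ → M) (X : PolynomialVectorField σ R) : Prop :=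
  ∀ j, X j ∈ offWeightSubmodule R w (w j)

theorem isResonant_iff [Fintype σ] {S : Type*} [Semiring S] {w : σ → S}
    {X : PolynomialVectorField σ R} :
    IsResonant w X ↔ ∀ j, ∀ m ∈ (X j).support, w j = ∑ k, (m k : S) * w k := by
  simp only [IsResonant, IsWeightedHomogeneous, mem_support_iff, Finsupp.weight_eq_sum,
    nsmul_eq_mul, eq_comm]

theorem isNonresonant_iff [Fintype σ] {S : Type*} [Semiring S] {w : σ → S}
    {X : PolynomialVectorField σ R} :
    IsNonresonant w X ↔ ∀ j, ∀ m ∈ (X j).support, w j ≠ ∑ k, (m k : S) * w k := by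
  simp only [IsNonresonant, offWeightSubmodule, mem_restrictSupport_iff, Set.subset_def,
    Finset.mem_coe, Set.mem_ofPred_eq, Finsupp.weight_eq_sum, nsmul_eq_mul, ne_comm]

theorem add_single_mem_support_of_mem_support_pderiv {p : MvPolynomial σ R} {k : σ} {m : σ →₀ ℕ}
    (hm : m ∈ (pderiv k p).support) : m + Finsupp.single k 1 ∈ p.support := by
  rw [mem_support_iff, coeff_pderiv] at hm
  exact mem_support_iff.2 (left_ne_zero_of_mul hm)

theorem exists_add_eq_of_mem_support_mul_pderiv {p q : MvPolynomial σ R} {k : σ} {m : σ →₀ ℕ}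
    (hm : m ∈ (p * pderiv k q).support) :
    ∃ a ∈ p.support, ∃ b, b + Finsupp.single k 1 ∈ q.support ∧ a + b = m := by
  classical
  obtain ⟨a, ha, b, hb, hab⟩ := Finset.mem_add.1 (support_mul p (pderiv k q) hm)
  exact ⟨a, ha, b, add_single_mem_support_of_mem_support_pderiv hb, hab⟩

theorem weight_add_single_one [AddCommMonoid M] (w : σ → M) (m : σ →₀ ℕ) (k : σ) :
    Finsupp.weight w (m + Finsupp.single k 1) = Finsupp.weight w m + w k := by
  rw [map_add, Finsupp.weight_single, one_smul]

theorem mul_pderiv_mem_offWeightSubmodule_of_isWeightedHomogeneous_left [AddCommMonoid M]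
    {w : σ → M} {d : M} {k : σ} {p q : MvPolynomial σ R}
    (hp : IsWeightedHomogeneous w p (w k)) (hq : q ∈ offWeightSubmodule R w d) :
    p * pderiv k q ∈ offWeightSubmodule R w d := by
  rintro m hm (hmd : Finsupp.weight w m = d)
  obtain ⟨a, ha, b, hb, rfl⟩ := exists_add_eq_of_mem_support_mul_pderiv hm
  refine hq hb ?_
  calc Finsupp.weight w (b + Finsupp.single k 1)
      = Finsupp.weight w a + Finsupp.weight w b := by
        rw [weight_add_single_one, hp (mem_support_iff.1 ha), add_comm]
    _ = d := by rw [← map_add, hmd]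

theorem mul_pderiv_mem_offWeightSubmodule_of_isWeightedHomogeneous_right [AddCancelCommMonoid M]
    {w : σ → M} {d : M} {k : σ} {p q : MvPolynomial σ R}
    (hp : p ∈ offWeightSubmodule R w (w k)) (hq : IsWeightedHomogeneous w q d) :
    p * pderiv k q ∈ offWeightSubmodule R w d := by
  rintro m hm (hmd : Finsupp.weight w m = d)
  obtain ⟨a, ha, b, hb, rfl⟩ := exists_add_eq_of_mem_support_mul_pderiv hm
  refine hp ha (add_left_cancel (a := Finsupp.weight w b) ?_)
  calc Finsupp.weight w b + Finsupp.weight w a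
      = d := by rw [add_comm, ← map_add, hmd]
    _ = Finsupp.weight w b + w k := by
        rw [← weight_add_single_one, hq (mem_support_iff.1 hb)]

end Weights

end PolynomialVectorField

open PolynomialVectorField in
theorem stmt_10_general {σ R M : Type*} [Fintype σ] [CommRing R] [AddCancelCommMonoid M]
    {w : σ → M} {X Y : PolynomialVectorField σ R} (hX : IsResonant w X) (hY : IsNonresonant w Y) :
    IsNonresonant w (lieBracket X Y) := fun j ↦
  Submodule.sum_mem _ fun k _ ↦ Submodule.sub_mem _
    (mul_pderiv_mem_offWeightSubmodule_of_isWeightedHomogeneous_left (hX k) (hY j))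
    (mul_pderiv_mem_offWeightSubmodule_of_isWeightedHomogeneous_right (hY k) (hX j))

/-- The Lie bracket of a λ-resonant polynomial vector field with a
polynomial vector field all of whose monomials are non-λ-resonant has only
non-λ-resonant monomials. -/
theorem stmt_10 (n : ℕ) (hn : 1 ≤ n) (l : Fin n → ℂ)
    (X Y : Fin n → MvPolynomial (Fin n) ℂ)
    (hX : ∀ j, ∀ m ∈ (X j).support, l j = ∑ k, (m k : ℂ) * l k)
    (hY : ∀ j, ∀ m ∈ (Y j).support, l j ≠ ∑ k, (m k : ℂ) * l k) :
    ∀ j, ∀ m ∈ (∑ k, (X k * MvPolynomial.pderiv k (Y j)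
        - Y k * MvPolynomial.pderiv k (X j))).support,
      l j ≠ ∑ k, (m k : ℂ) * l k :=
  PolynomialVectorField.isNonresonant_iff.1 (stmt_10_general
    (PolynomialVectorField.isResonant_iff.2 hX) (PolynomialVectorField.isNonresonant_iff.2 hY))
end

section
/- Let n ≥ 1 and let λ : Fin n → ℂ lie in the Poincaré domain. If f : (Fin n → ℂ) → ℂ is entire and satisfies Df(z)(λ·z) = 0 for every z ∈ ℂⁿ, where λ·z denotes the vector (λ_1 z_1, …, λ_n z_n), then f is constant. (The kernel of the Lie derivative L_{ξ₀} along the diagonal vector field ξ₀ = ∑_j λ_j z_j ∂/∂z_j on entire functions consists exactly of the constants.) -/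
open scoped BigOperators

/-!
The flow of the linear vector field `z ↦ λ · z` is `z ↦ exp (t λ) · z` for complex time `t`, and an
entire function killed by the field is invariant under this flow. In the Poincaré domain a
half-plane `{w | 0 < re (w a)}` contains every `λ j`, so along the complex times `t = s a` with
`s → -∞` the flow contracts every point to the origin. By continuity such a function takes
everywhere its value at `0`.
-/

open Filter Topology NormedSpace

section LinearFlow

variable {𝕜 𝔸 E F : Type*} [RCLike 𝕜]
  [NormedRing 𝔸] [NormedAlgebra 𝕜 𝔸] [CompleteSpace 𝔸]
  [NormedAddCommGroup E] [NormedSpace 𝕜 E] [Module 𝔸 E] [IsBoundedSMul 𝔸 E] [IsScalarTower 𝕜 𝔸 E]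
  [NormedAddCommGroup F] [NormedSpace 𝕜 F]

theorem hasDerivAt_exp_smul_smul_const (a : 𝔸) (z : E) (t : 𝕜) :
    HasDerivAt (fun s : 𝕜 => exp (s • a) • z) (a • exp (t • a) • z) t := by
  simpa only [mul_smul] using (hasDerivAt_exp_smul_const' a t).smul_const z

theorem apply_exp_smul_smul_of_fderiv_smul_eq_zero {f : E → F} (hf : Differentiable 𝕜 f) {a : 𝔸}
    (hfa : ∀ z, fderiv 𝕜 f z (a • z) = 0) (t : 𝕜) (z : E) :
    f (exp (t • a) • z) = f z := by
  have hderiv (s : 𝕜) : HasDerivAt (fun s : 𝕜 => f (exp (s • a) • z)) 0 s := by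
    simpa only [hfa, Function.comp_def] using
      (hf _).hasFDerivAt.comp_hasDerivAt s (hasDerivAt_exp_smul_smul_const a z s)
  simpa only [zero_smul, exp_zero, one_smul] using
    is_const_of_deriv_eq_zero (fun s => (hderiv s).differentiableAt) (fun s => (hderiv s).deriv) t 0

theorem apply_eq_apply_zero_of_tendsto_exp_smul {f : E → F} (hf : Differentiable 𝕜 f) {a : 𝔸}
    (hfa : ∀ z, fderiv 𝕜 f z (a • z) = 0) {α : Type*} {p : Filter α} [p.NeBot] {t : α → 𝕜}
    (ht : Tendsto (fun x => exp (t x • a)) p (𝓝 0)) (z : E) :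
    f z = f 0 := by
  have hflow : Tendsto (fun x => exp (t x • a) • z) p (𝓝 0) := by
    simpa only [zero_smul] using ht.smul_const z
  have hlim : Tendsto (fun x => f (exp (t x • a) • z)) p (𝓝 (f 0)) :=
    (hf.continuous.tendsto 0).comp hflow
  simp only [apply_exp_smul_smul_of_fderiv_smul_eq_zero hf hfa] at hlim
  exact tendsto_nhds_unique tendsto_const_nhds hlim

end LinearFlow

theorem exists_forall_re_mul_pos_of_zero_notMem {𝕜 : Type*} [RCLike 𝕜] {s : Set 𝕜}
    (hs : Convex ℝ s) (hs_closed : IsClosed s) (h0 : (0 : 𝕜) ∉ s) :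
    ∃ a : 𝕜, ∀ z ∈ s, 0 < RCLike.re (z * a) := by
  obtain ⟨φ, u, hu, hφ⟩ := RCLike.geometric_hahn_banach_point_closed (𝕜 := 𝕜) hs hs_closed h0
  refine ⟨φ 1, fun z hz => ?_⟩
  have hφz : φ z = z * φ 1 := by rw [← smul_eq_mul, ← map_smul, smul_eq_mul, mul_one]
  rw [map_zero, map_zero] at hu
  exact hφz ▸ hu.trans (hφ z hz)

section Diagonal

variable {ι : Type*} [Finite ι] {l : ι → ℂ}

theorem tendsto_exp_ofReal_mul_smul_atBot {a : ℂ} (hl : ∀ j, 0 < (l j * a).re) :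
    Tendsto (fun s : ℝ => exp (((s : ℂ) * a) • l)) atBot (𝓝 0) := by
  refine tendsto_pi_nhds.2 fun j => ?_
  simp only [Pi.coe_exp, Pi.smul_apply, smul_eq_mul, Pi.zero_apply, ← Complex.exp_eq_exp_ℂ,
    Complex.tendsto_exp_nhds_zero_iff, mul_assoc, Complex.re_ofReal_mul, mul_comm a]
  exact tendsto_id.atBot_mul_const (hl j)

theorem stmt_15_general {F : Type*} [NormedAddCommGroup F] [NormedSpace ℂ F]
    (hl : (0 : ℂ) ∉ convexHull ℝ (Set.range l)) {f : (ι → ℂ) → F} (hf : Differentiable ℂ f)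
    (hker : ∀ z : ι → ℂ, fderiv ℂ f z (fun j => l j * z j) = 0) (z : ι → ℂ) :
    f z = f 0 := by
  have := Fintype.ofFinite ι
  have hclosed : IsClosed (convexHull ℝ (Set.range l)) :=
    (Set.finite_range l).isClosed_convexHull ℝ
  obtain ⟨a, ha⟩ :=
    exists_forall_re_mul_pos_of_zero_notMem (convex_convexHull ℝ (Set.range l)) hclosed hl
  have hpos (j : ι) : 0 < (l j * a).re :=
    ha (l j) (subset_convexHull ℝ _ (Set.mem_range_self j))
  exact apply_eq_apply_zero_of_tendsto_exp_smul hf hker (tendsto_exp_ofReal_mul_smul_atBot hpos) z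

end Diagonal

/-- If `λ` is in the Poincaré domain and `f` is entire with
`Df(z)(λ·z) = 0` for all `z`, then `f` is constant. -/
theorem stmt_15 (n : ℕ) (hn : 1 ≤ n) (l : Fin n → ℂ)
    (hP : (0 : ℂ) ∉ convexHull ℝ (Set.range l))
    (f : (Fin n → ℂ) → ℂ) (hf : Differentiable ℂ f)
    (hker : ∀ z : Fin n → ℂ, fderiv ℂ f z (fun j => l j * z j) = 0) :
    ∃ c : ℂ, ∀ z, f z = c :=
  ⟨f 0, stmt_15_general hP hf hker⟩
end

section
/- Let n ≥ 1, let λ : Fin n → ℂ lie in the Poincaré domain, and let ξ be a polynomial vector field in Poincaré–Dulac normal form for λ. If X is a polynomial vector field on ℂⁿ having only non-λ-resonant monomials (for every j and every exponent m in the support of X_j one has λ_j ≠ (m,λ)) and the Lie bracket [ξ,X] vanishes, then X = 0. (The Lie derivative L_ξ is injective on the non-resonant part g_λ^⊥.) -/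
open scoped BigOperators

/-!
Give the variable `z_k` a weight growing so fast in `k` that every nilpotent term `z^m ∂_j` of `ξ`,
which only involves variables below `z_j`, has negative weight. Write `ξ = S + N` with `S` diagonal
and `N` nilpotent, and take a monomial `z^m ∂_j` of maximal weight in a field `V ≠ 0` with
`[ξ, V] = 0`. Since `[N, V]` has strictly smaller weight, its `z^m ∂_j`-coefficient vanishes, so
the one of `[S, V]`, which is `(m, λ) - λ_j` times that of `V`, vanishes too: the monomial is
resonant.
-/

section

open MvPolynomial

variable {σ R M : Type*} [CommRing R] {D E N V : Derivation R (MvPolynomial σ R) (MvPolynomial σ R)}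

section WeightFiltration

variable [AddCommMonoid M] [Preorder M] {w : σ → M} {d e : M}

variable (R) in
/-- The polynomials all of whose monomials have `w`-weight at most `d`; these submodules form the
increasing filtration of the polynomial ring by weight. -/
noncomputable def weightLE (w : σ → M) (d : M) : Submodule R (MvPolynomial σ R) :=
  restrictSupport R {m | Finsupp.weight w m ≤ d}

theorem mem_weightLE {p : MvPolynomial σ R} :
    p ∈ weightLE R w d ↔ ∀ m ∈ p.support, Finsupp.weight w m ≤ d :=
  Iff.rfl

theorem monomial_mem_weightLE {m : σ →₀ ℕ} (hm : Finsupp.weight w m ≤ d) (c : R) :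
    monomial m c ∈ weightLE R w d :=
  (monomial_mem_restrictSupport R).2 (Or.inl hm)

theorem weightLE_mono (hde : d ≤ e) : weightLE R w d ≤ weightLE R w e :=
  restrictSupport_mono R fun _ hm => le_trans hm hde

theorem mul_mem_weightLE [IsOrderedAddMonoid M] {p q : MvPolynomial σ R} (hp : p ∈ weightLE R w d)
    (hq : q ∈ weightLE R w e) : p * q ∈ weightLE R w (d + e) := by
  classical
  refine mem_weightLE.mpr fun m hm => ?_
  obtain ⟨a, ha, b, hb, rfl⟩ := Finset.mem_add.mp (support_mul p q hm)
  rw [map_add]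
  exact add_le_add (hp ha) (hq hb)

/-- A polynomial vector field, encoded as a derivation, has weight at most `e` if each of its
monomials `z^m ∂_j` satisfies `weight m - w j ≤ e`; the inequality is written without
subtraction. -/
def HasWeightLE (w : σ → M) (e : M) (D : Derivation R (MvPolynomial σ R) (MvPolynomial σ R)) :
    Prop :=
  ∀ j, D (X j) ∈ weightLE R w (e + w j)

namespace HasWeightLE

variable [IsOrderedAddMonoid M]

theorem apply_monomial_mem (hD : HasWeightLE w e D) (m : σ →₀ ℕ) :
    D (monomial m 1) ∈ weightLE R w (e + Finsupp.weight w m) := by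
  have hDX : D = mkDerivation R fun j => D (X j) := derivation_ext fun j => by
    rw [mkDerivation_X]
  rw [hDX, mkDerivation_monomial, one_smul]
  refine sum_mem fun i hi => ?_
  have hweight : Finsupp.weight w (m - Finsupp.single i 1) + w i = Finsupp.weight w m := by
    rw [Finsupp.weight_sub_single_add (Finsupp.mem_support_iff.mp hi)]
  rw [← hweight, add_left_comm]
  exact mul_mem_weightLE (monomial_mem_weightLE le_rfl _) (hD i)

theorem apply_mem (hD : HasWeightLE w e D) {p : MvPolynomial σ R} (hp : p ∈ weightLE R w d) :
    D p ∈ weightLE R w (e + d) := by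
  rw [weightLE, restrictSupport_eq_span] at hp
  suffices Submodule.span R _ ≤ (weightLE R w (e + d)).comap D.toLinearMap from this hp
  rw [Submodule.span_le]
  rintro _ ⟨m, hm, rfl⟩
  exact weightLE_mono (add_le_add_right hm e) (hD.apply_monomial_mem m)

theorem lie (hD : HasWeightLE w d D) (hE : HasWeightLE w e E) : HasWeightLE w (d + e) ⁅D, E⁆ := by
  intro j
  rw [Derivation.commutator_apply]
  refine sub_mem ?_ ?_
  · rw [add_assoc]
    exact hD.apply_mem (hE j)
  · rw [add_comm d e, add_assoc]
    exact hE.apply_mem (hD j)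

end HasWeightLE

end WeightFiltration

theorem exists_hasWeightLE_and_weight_eq_of_ne_zero [Finite σ] [AddCommGroup M] [LinearOrder M]
    [IsOrderedAddMonoid M] (w : σ → M) (hV : V ≠ 0) :
    ∃ d, HasWeightLE w d V ∧ ∃ j, ∃ m ∈ (V (X j)).support, Finsupp.weight w m = d + w j := by
  have := Fintype.ofFinite σ
  let terms : Finset (Σ _ : σ, σ →₀ ℕ) := Finset.univ.sigma fun j => (V (X j)).support
  have hterms : terms.Nonempty := by
    contrapose! hV
    ext1 j
    simpa [terms] using Finset.sigma_eq_empty.mp hV j (Finset.mem_univ j)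
  obtain ⟨⟨j, m⟩, hjm, hmax⟩ :=
    terms.exists_max_image (fun t => Finsupp.weight w t.2 - w t.1) hterms
  refine ⟨Finsupp.weight w m - w j, fun i u hu => ?_, j, m, (Finset.mem_sigma.mp hjm).2,
    (sub_add_cancel _ _).symm⟩
  exact sub_le_iff_le_add.mp (hmax ⟨i, u⟩ (Finset.mem_sigma.mpr ⟨Finset.mem_univ i, hu⟩))

section Triangular

variable [Preorder σ]

theorem exists_pos_and_mul_le_of_lt [Finite σ] (b : ℕ) :
    ∃ w : σ → ℤ, (∀ j, 0 < w j) ∧ ∀ k j, k < j → (b + 1) * w k ≤ w j := by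
  refine ⟨fun j => (b + 1) ^ (Set.Iio j).ncard, fun j => by positivity, fun k j hkj => ?_⟩
  have hcard : (Set.Iio k).ncard < (Set.Iio j).ncard :=
    Set.ncard_lt_ncard (Set.Iio_ssubset_Iio hkj) (Set.toFinite _)
  rw [← pow_succ']
  exact pow_le_pow_right₀ (by lia) hcard

theorem weight_lt_of_forall_mem_support_lt {b : ℕ} {w : σ → ℤ} {j : σ} (hj : 0 < w j)
    (hw : ∀ k < j, (b + 1) * w k ≤ w j) {m : σ →₀ ℕ} (hm : ∀ k ∈ m.support, k < j)
    (hb : m.degree ≤ b) : Finsupp.weight w m < w j := by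
  have hmul : (b + 1) * Finsupp.weight w m < (b + 1) * w j :=
    calc (b + 1) * Finsupp.weight w m
      _ = ∑ k ∈ m.support, (m k : ℤ) * ((b + 1) * w k) := by
        rw [Finsupp.weight_apply, Finsupp.sum, Finset.mul_sum]
        exact Finset.sum_congr rfl fun k _ => by rw [nsmul_eq_mul, mul_left_comm]
      _ ≤ ∑ k ∈ m.support, (m k : ℤ) * w j := by
        gcongr with k hk
        exact hw k (hm k hk)
      _ = m.degree * w j := by
        rw [← Finset.sum_mul, Finsupp.degree_apply, Nat.cast_sum]
      _ ≤ b * w j := by gcongr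
      _ < (b + 1) * w j := by linarith
  exact lt_of_mul_lt_mul_left hmul (by positivity)

theorem exists_hasWeightLE_neg_one [Finite σ]
    (hN : ∀ j, N (X j) ∈ supported R (Set.Iio j)) : ∃ w : σ → ℤ, HasWeightLE w (-1) N := by
  obtain ⟨b, hb⟩ := Finite.exists_le fun j => (N (X j)).totalDegree
  obtain ⟨w, hpos, hw⟩ := exists_pos_and_mul_le_of_lt (σ := σ) b
  refine ⟨w, fun j => mem_weightLE.mpr fun m hm => ?_⟩
  have hlt : Finsupp.weight w m < w j :=
    weight_lt_of_forall_mem_support_lt (hpos j) (fun k => hw k j)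
      (fun k hk => mem_supported.mp (hN j) ((mem_vars_iff_mem_support k).mpr ⟨m, hm, hk⟩))
      ((le_totalDegree hm).trans (hb j))
  lia

end Triangular

section Diagonal

/-- The diagonal linear vector field `∑ l_j z_j ∂_j`, the semisimple part of a normal form with
eigenvalues `l`. -/
noncomputable def diagonalField (l : σ → R) :
    Derivation R (MvPolynomial σ R) (MvPolynomial σ R) :=
  mkDerivation R fun j => C (l j) * X j

theorem diagonalField_monomial (l : σ → R) (m : σ →₀ ℕ) (c : R) :
    diagonalField l (monomial m c) = Finsupp.weight l m • monomial m c := by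
  rw [diagonalField, mkDerivation_monomial, Finsupp.weight_apply, Finsupp.sum, Finsupp.sum,
    Finset.sum_smul, Finset.smul_sum]
  refine Finset.sum_congr rfl fun i hi => ?_
  have hle : Finsupp.single i 1 ≤ m :=
    Finsupp.single_le_iff.mpr (Nat.one_le_iff_ne_zero.mpr (Finsupp.mem_support_iff.mp hi))
  rw [C_mul_X_eq_monomial, smul_eq_mul, monomial_mul, tsub_add_cancel_of_le hle, smul_monomial,
    smul_monomial, nsmul_eq_mul, smul_eq_mul, smul_eq_mul, mul_comm]

theorem coeff_diagonalField (l : σ → R) (m : σ →₀ ℕ) (p : MvPolynomial σ R) :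
    coeff m (diagonalField l p) = Finsupp.weight l m * coeff m p := by
  classical
  induction p using MvPolynomial.induction_on' with
  | monomial u c =>
    rw [diagonalField_monomial, coeff_smul, coeff_monomial, smul_eq_mul]
    split_ifs with h
    · rw [h]
    · rw [mul_zero, mul_zero]
  | add p q hp hq => rw [map_add, coeff_add, coeff_add, hp, hq, mul_add]

theorem coeff_lie_diagonalField_X (l : σ → R) (m : σ →₀ ℕ) (j : σ) :
    coeff m (⁅diagonalField l, V⁆ (X j)) = (Finsupp.weight l m - l j) * coeff m (V (X j)) := by
  have hX : V (diagonalField l (X j)) = C (l j) * V (X j) := by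
    rw [diagonalField, mkDerivation_X, C_mul', Derivation.map_smul, C_mul']
  rw [Derivation.commutator_apply, coeff_sub, coeff_diagonalField, hX, coeff_C_mul, sub_mul]

end Diagonal

theorem eq_zero_of_lie_diagonalField_add_eq_zero [Finite σ] [Preorder σ] [NoZeroDivisors R]
    {l : σ → R} (hN : ∀ j, N (X j) ∈ supported R (Set.Iio j))
    (hV : ∀ j, ∀ m ∈ (V (X j)).support, l j ≠ Finsupp.weight l m)
    (hlie : ⁅diagonalField l + N, V⁆ = 0) : V = 0 := by
  by_contra hne
  obtain ⟨w, hNw⟩ := exists_hasWeightLE_neg_one hN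
  obtain ⟨d, hVd, j, m, hm, hmd⟩ := exists_hasWeightLE_and_weight_eq_of_ne_zero w hne
  have hNV : coeff m (⁅N, V⁆ (X j)) = 0 := by
    by_contra h
    have := mem_weightLE.mp (hNw.lie hVd j) m (mem_support_iff.mpr h)
    lia
  have hSV : (Finsupp.weight l m - l j) * coeff m (V (X j)) = 0 :=
    calc (Finsupp.weight l m - l j) * coeff m (V (X j))
      _ = coeff m (⁅diagonalField l, V⁆ (X j)) + coeff m (⁅N, V⁆ (X j)) := by
        rw [coeff_lie_diagonalField_X, hNV, add_zero]
      _ = coeff m (⁅diagonalField l + N, V⁆ (X j)) := by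
        rw [add_lie (diagonalField l) N V, Derivation.add_apply, coeff_add]
      _ = 0 := by rw [hlie, Derivation.zero_apply, coeff_zero]
  rcases mul_eq_zero.mp hSV with hres | hcoeff
  · exact hV j m hm (sub_eq_zero.mp hres).symm
  · exact mem_support_iff.mp hm hcoeff

section Coordinates

theorem mkDerivation_apply_eq_sum [Fintype σ] (f : σ → MvPolynomial σ R) (p : MvPolynomial σ R) :
    mkDerivation R f p = ∑ k, f k * pderiv k p := by
  induction p using MvPolynomial.induction_on' with
  | monomial m c =>
    rw [mkDerivation_monomial, Finsupp.sum_fintype _ _ (by simp), Finset.smul_sum]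
    refine Finset.sum_congr rfl fun k _ => ?_
    rw [pderiv_monomial, smul_eq_mul, ← smul_mul_assoc, smul_monomial, smul_eq_mul, mul_comm]
  | add p q hp hq => simp only [map_add, hp, hq, mul_add, Finset.sum_add_distrib]

theorem lie_mkDerivation_X [Fintype σ] (f g : σ → MvPolynomial σ R) (j : σ) :
    ⁅mkDerivation R f, mkDerivation R g⁆ (X j) =
      ∑ k, (f k * pderiv k (g j) - g k * pderiv k (f j)) := by
  rw [Derivation.commutator_apply, mkDerivation_X, mkDerivation_X, mkDerivation_apply_eq_sum,
    mkDerivation_apply_eq_sum, Finset.sum_sub_distrib]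

theorem C_mul_prod_X_pow_mem_supported [Fintype σ] {s : Set σ} {m : σ → ℕ}
    (hm : ∀ k ∉ s, m k = 0) (c : R) : C c * ∏ k, X k ^ m k ∈ supported R s := by
  nontriviality R
  refine mul_mem (Subalgebra.algebraMap_mem _ c) (prod_mem fun k _ => ?_)
  by_cases hk : k ∈ s
  · exact pow_mem (X_mem_supported.mpr hk) _
  · rw [hm k hk, pow_zero]
    exact one_mem _

theorem stmt_17_general [Fintype σ] [Preorder σ] [NoZeroDivisors R] (l : σ → R)
    (ξ : σ → MvPolynomial σ R) (hξ : ∀ j, ξ j - C (l j) * X j ∈ supported R (Set.Iio j))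
    (Y : σ → MvPolynomial σ R)
    (hY : ∀ j, ∀ m ∈ (Y j).support, l j ≠ ∑ k, (m k : R) * l k)
    (hbr : ∀ j, ∑ k, (ξ k * pderiv k (Y j) - Y k * pderiv k (ξ j)) = 0) : Y = 0 := by
  set N := mkDerivation R fun j => ξ j - C (l j) * X j with hN
  have hsplit : diagonalField l + N = mkDerivation R ξ := derivation_ext fun j => by
    simp only [diagonalField, hN, Derivation.add_apply, mkDerivation_X, add_sub_cancel]
  have hzero : mkDerivation R Y = 0 := by
    refine eq_zero_of_lie_diagonalField_add_eq_zero (l := l) (N := N) (fun j => ?_)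
      (fun j m hm => ?_) (derivation_ext fun j => ?_)
    · simpa only [hN, mkDerivation_X] using hξ j
    · rw [mkDerivation_X] at hm
      simpa only [Finsupp.weight_eq_sum, nsmul_eq_mul] using hY j m hm
    · rw [hsplit, lie_mkDerivation_X, hbr, Derivation.zero_apply]
  funext j
  rw [← mkDerivation_X R Y j, hzero, Derivation.zero_apply, Pi.zero_apply]

end Coordinates

end

/-- Let `ξ` be a polynomial vector field in Poincaré–Dulac normal form for
`λ` in the Poincaré domain. If `X` is a polynomial vector field having only
non-λ-resonant monomials and `[ξ, X] = 0`, then `X = 0`. -/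
theorem stmt_17 (n : ℕ) (hn : 1 ≤ n) (l : Fin n → ℂ)
    (hP : (0 : ℂ) ∉ convexHull ℝ (Set.range l))
    (R : Finset (Fin n × (Fin n → ℕ))) (a : Fin n × (Fin n → ℕ) → ℂ)
    (hR : ∀ p ∈ R, 1 ≤ (p.1 : ℕ) ∧ l p.1 = ∑ k, (p.2 k : ℂ) * l k ∧
      (∀ k, p.1 ≤ k → p.2 k = 0) ∧
      (2 ≤ ∑ k, p.2 k ∨ ∃ i : Fin n, (i : ℕ) + 1 = (p.1 : ℕ) ∧
        p.2 = fun k => if k = i then 1 else 0))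
    (ξ : Fin n → MvPolynomial (Fin n) ℂ)
    (hξ : ∀ j, ξ j = MvPolynomial.C (l j) * MvPolynomial.X j +
      ∑ p ∈ R.filter (fun p => p.1 = j),
        MvPolynomial.C (a p) * ∏ k, MvPolynomial.X k ^ p.2 k)
    (X : Fin n → MvPolynomial (Fin n) ℂ)
    (hX : ∀ j, ∀ m ∈ (X j).support, l j ≠ ∑ k, (m k : ℂ) * l k)
    (hbr : ∀ j, (∑ k, (ξ k * MvPolynomial.pderiv k (X j)
        - X k * MvPolynomial.pderiv k (ξ j))) = 0) :
    X = 0 := by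
  refine stmt_17_general l ξ (fun j => ?_) X hX hbr
  rw [hξ, add_sub_cancel_left]
  refine sum_mem fun p hp => C_mul_prod_X_pow_mem_supported (fun k hk => ?_) (a p)
  obtain ⟨hpR, rfl⟩ := Finset.mem_filter.mp hp
  exact (hR p hpR).2.2.1 k (not_lt.mp hk)
end
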